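/- arXiv:2212.11540 — 6 statements merged into one kernel-verified Lean document; each statement's English description precedes it below -/
import Mathlib

section
/- Let T > 0, 0 <= a < b < T, gamma >= 0, kappa1 >= 0, kappa1' >= 0, and define phi1(t) = (kappa1/t + kappa1') * exp(-gamma*t) for t > 0. Then 0 <= ∫_a^b (b - s) * phi1(T-s) ds <= exp(-gamma*(T-b)) * ( kappa1 * ( (b-a) - (T-b) * log(1 + (b-a)/(T-b)) ) + kappa1' * (b-a)^2 / 2 ). -/
open MeasureTheory

/-! The factor `exp (-γ * (T - s))` increases in `s`, so on `[a, b]` it is at most its value at `b`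
and can be pulled out of the integral. What remains is computed exactly, using
`(b - s) / (T - s) = 1 - (T - b) / (T - s)`. -/

theorem intervalIntegral_mul_le_mul_of_le_const {f g : ℝ → ℝ} {a b c : ℝ} {μ : Measure ℝ}
    (hab : a ≤ b) (hf : IntervalIntegrable f μ a b)
    (hf_nonneg : ∀ s ∈ Set.Icc a b, 0 ≤ f s) (hg : ContinuousOn g (Set.uIcc a b))
    (hgc : ∀ s ∈ Set.Icc a b, g s ≤ c) :
    ∫ s in a..b, f s * g s ∂μ ≤ c * ∫ s in a..b, f s ∂μ := by
  rw [mul_comm c, ← intervalIntegral.integral_mul_const]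
  exact intervalIntegral.integral_mono_on hab (hf.mul_continuousOn hg) (hf.mul_const c)
    fun s hs ↦ mul_le_mul_of_nonneg_left (hgc s hs) (hf_nonneg s hs)

theorem exp_neg_mul_sub_le_exp_neg_mul_sub {γ s b : ℝ} (hγ : 0 ≤ γ) (hsb : s ≤ b) (T : ℝ) :
    Real.exp (-γ * (T - s)) ≤ Real.exp (-γ * (T - b)) :=
  Real.exp_le_exp.mpr <|
    mul_le_mul_of_nonpos_left (sub_le_sub_left hsb T) (neg_nonpos.mpr hγ)

section ReciprocalKernel

variable {a b T : ℝ}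

theorem sub_ne_zero_of_notMem_uIcc (hT : T ∉ Set.uIcc a b) {s : ℝ} (hs : s ∈ Set.uIcc a b) :
    T - s ≠ 0 :=
  sub_ne_zero.mpr (ne_of_mem_of_not_mem hs hT).symm

theorem intervalIntegrable_const_div_sub {μ : Measure ℝ} [IsLocallyFiniteMeasure μ]
    (hT : T ∉ Set.uIcc a b) (c : ℝ) :
    IntervalIntegrable (fun s ↦ c / (T - s)) μ a b :=
  (continuousOn_const.div (by fun_prop)
    fun _ hs ↦ sub_ne_zero_of_notMem_uIcc hT hs).intervalIntegrable

theorem integral_inv_const_sub (hT : T ∉ Set.uIcc a b) :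
    ∫ s in a..b, (T - s)⁻¹ = Real.log ((T - a) / (T - b)) := by
  have zero_notMem : (0 : ℝ) ∉ Set.uIcc (T - b) (T - a) := by
    rw [Set.uIcc_comm, ← Set.image_const_sub_uIcc]
    rintro ⟨s, hs, hTs⟩
    exact sub_ne_zero_of_notMem_uIcc hT hs hTs
  rw [intervalIntegral.integral_comp_sub_left (fun t ↦ t⁻¹), integral_inv zero_notMem]

theorem integral_right_sub (a b : ℝ) : ∫ s in a..b, (b - s) = (b - a) ^ 2 / 2 := by
  rw [intervalIntegral.integral_comp_sub_left (fun t ↦ t), integral_id]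
  ring

theorem integral_right_sub_div_const_sub (hT : T ∉ Set.uIcc a b) :
    ∫ s in a..b, (b - s) / (T - s) =
      (b - a) - (T - b) * Real.log (1 + (b - a) / (T - b)) := by
  have integrand_eq : ∀ s ∈ Set.uIcc a b, (b - s) / (T - s) = 1 - (T - b) * (T - s)⁻¹ := by
    intro s hs
    have hTs := sub_ne_zero_of_notMem_uIcc hT hs
    field_simp
    ring
  have inv_integrable : IntervalIntegrable (fun s ↦ (T - s)⁻¹) volume a b := by
    simpa only [one_div] using intervalIntegrable_const_div_sub hT 1
  have ratio_eq : (T - a) / (T - b) = 1 + (b - a) / (T - b) := by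
    have hTb := sub_ne_zero_of_notMem_uIcc hT Set.right_mem_uIcc
    field_simp
    ring
  rw [intervalIntegral.integral_congr integrand_eq,
    intervalIntegral.integral_sub intervalIntegrable_const (inv_integrable.const_mul _),
    integral_one, intervalIntegral.integral_const_mul, integral_inv_const_sub hT, ratio_eq]

theorem intervalIntegrable_right_sub_mul_div_add_const {μ : Measure ℝ} [IsLocallyFiniteMeasure μ]
    (hT : T ∉ Set.uIcc a b) (κ κ' : ℝ) :
    IntervalIntegrable (fun s ↦ (b - s) * (κ / (T - s) + κ')) μ a b :=
  ((intervalIntegrable_const_div_sub hT κ).add intervalIntegrable_const).continuousOn_mul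
    (by fun_prop)

theorem integral_right_sub_mul_div_add_const (hT : T ∉ Set.uIcc a b) (κ κ' : ℝ) :
    ∫ s in a..b, (b - s) * (κ / (T - s) + κ') =
      κ * ((b - a) - (T - b) * Real.log (1 + (b - a) / (T - b))) + κ' * (b - a) ^ 2 / 2 := by
  have div_integrable : IntervalIntegrable (fun s ↦ (b - s) / (T - s)) volume a b := by
    simpa only [add_zero, mul_one_div] using
      intervalIntegrable_right_sub_mul_div_add_const hT 1 0
  have sub_integrable : IntervalIntegrable (fun s ↦ b - s) volume a b :=
    (by fun_prop : Continuous fun s ↦ b - s).intervalIntegrable a b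
  calc ∫ s in a..b, (b - s) * (κ / (T - s) + κ')
      = ∫ s in a..b, (κ * ((b - s) / (T - s)) + κ' * (b - s)) := by
        congr! 2 with s
        ring
    _ = κ * (∫ s in a..b, (b - s) / (T - s)) + κ' * ∫ s in a..b, (b - s) := by
        rw [intervalIntegral.integral_add (div_integrable.const_mul κ)
          (sub_integrable.const_mul κ'), intervalIntegral.integral_const_mul,
          intervalIntegral.integral_const_mul]
    _ = _ := by
        rw [integral_right_sub_div_const_sub hT, integral_right_sub, mul_div_assoc]

end ReciprocalKernel

/-- Equation (7) of the paper: the bound for `∫_a^b (b-s) φ₁(T-s) ds` with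
`φ₁(t) = (κ₁/t + κ₁') e^{-γ t}`, producing the coefficient `ρ_j` of
Theorem 2 (backward Euler). -/
theorem green_phi1_weighted_integral_bound
    (T a b γ κ₁ κ₁' : ℝ)
    (hT : 0 < T) (ha : 0 ≤ a) (hab : a < b) (hbT : b < T)
    (hγ : 0 ≤ γ) (hκ₁ : 0 ≤ κ₁) (hκ₁' : 0 ≤ κ₁') :
    0 ≤ (∫ s in a..b, (b - s) * ((κ₁ / (T - s) + κ₁') * Real.exp (-γ * (T - s)))) ∧
      (∫ s in a..b, (b - s) * ((κ₁ / (T - s) + κ₁') * Real.exp (-γ * (T - s)))) ≤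
        Real.exp (-γ * (T - b)) *
          (κ₁ * ((b - a) - (T - b) * Real.log (1 + (b - a) / (T - b)))
            + κ₁' * (b - a) ^ 2 / 2) := by
  have hT_notMem : T ∉ Set.uIcc a b := fun h ↦ hbT.not_ge (Set.uIcc_of_le hab.le ▸ h).2
  have weight_nonneg : ∀ s ∈ Set.Icc a b, 0 ≤ (b - s) * (κ₁ / (T - s) + κ₁') := fun s hs ↦
    have hTs : 0 ≤ T - s := sub_nonneg.mpr (hs.2.trans hbT.le)
    mul_nonneg (sub_nonneg.mpr hs.2) (add_nonneg (div_nonneg hκ₁ hTs) hκ₁')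
  simp only [← mul_assoc (b - _)]
  constructor
  · exact intervalIntegral.integral_nonneg hab.le fun s hs ↦
      mul_nonneg (weight_nonneg s hs) (Real.exp_nonneg _)
  · rw [← integral_right_sub_mul_div_add_const hT_notMem]
    exact intervalIntegral_mul_le_mul_of_le_const hab.le
      (intervalIntegrable_right_sub_mul_div_add_const hT_notMem κ₁ κ₁') weight_nonneg
      (by fun_prop) fun s hs ↦ exp_neg_mul_sub_le_exp_neg_mul_sub hγ hs.2 T
end

section
/- Let T > 0, 0 <= a < b < T with b - a < T - b, and let k be a natural number. Then ∫_a^b (b - s)^k * (s - a)/(T - s) ds = (b - a)^{k+1} * SUM_{l=1}^{infinity} ( (-1)^{l+1} / ((l+k)*(l+k+1)) ) * ( (b-a)/(T-b) )^l, where the series on the right converges absolutely since (b-a)/(T-b) < 1. -/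
open MeasureTheory

/-!
With `r = (b - a) / (T - b)`, the substitution `b - s = (b - a) t` turns the moment integral into
`(b - a) ^ (k + 1) * r * ∫ t in 0..1, t ^ k * (1 - t) / (1 + r * t)`. Expand the last factor into a
geometric series and integrate term by term. The factor `1 - t` makes this legitimate for all
`|r| ≤ 1`, including `|r| = 1`: the terms are dominated by `t ^ (m + k) * (1 - t)`, whose sum over
`m` is the bounded function `t ^ k`.
-/

theorem integral_pow_mul_one_sub (n : ℕ) :
    ∫ t in (0 : ℝ)..1, t ^ n * (1 - t) = (((n : ℝ) + 1) * ((n : ℝ) + 2))⁻¹ := by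
  have integrable (j : ℕ) : IntervalIntegrable (fun t : ℝ => t ^ j) volume 0 1 :=
    (continuous_pow j).intervalIntegrable 0 1
  calc ∫ t in (0 : ℝ)..1, t ^ n * (1 - t)
      = ∫ t in (0 : ℝ)..1, (t ^ n - t ^ (n + 1)) := by congr 1 with t; ring
    _ = 1 / ((n : ℝ) + 1) - 1 / ((n : ℝ) + 1 + 1) := by
      simp [intervalIntegral.integral_sub (integrable n) (integrable (n + 1)), integral_pow]
    _ = (((n : ℝ) + 1) * ((n : ℝ) + 2))⁻¹ := by field_simp; ring

section NormedAlgebra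

variable {𝕜 : Type*} [NormedDivisionRing 𝕜] [NormedAlgebra ℝ 𝕜]

theorem hasSum_pow_mul_one_sub_smul_pow {z : 𝕜} (hz : ‖z‖ ≤ 1) {t : ℝ} (ht : t ∈ Set.Ico 0 1)
    (k : ℕ) :
    HasSum (fun m : ℕ => (t ^ (m + k) * (1 - t)) • z ^ m)
      ((t ^ k * (1 - t)) • (1 - t • z)⁻¹) := by
  have norm_lt_one : ‖t • z‖ < 1 := by
    rw [norm_smul, Real.norm_of_nonneg ht.1]
    exact (mul_le_of_le_one_right ht.1 hz).trans_lt ht.2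
  have term_eq (m : ℕ) :
      (t ^ (m + k) * (1 - t)) • z ^ m = (t ^ k * (1 - t)) • (t • z) ^ m := by
    rw [smul_pow, smul_smul]
    ring_nf
  simpa only [term_eq] using
    (hasSum_geometric_of_norm_lt_one norm_lt_one).const_smul (t ^ k * (1 - t))

theorem hasSum_pow_mul_one_sub {t : ℝ} (ht : t ∈ Set.Ico 0 1) (k : ℕ) :
    HasSum (fun m : ℕ => t ^ (m + k) * (1 - t)) (t ^ k) := by
  have one_sub_ne_zero : 1 - t ≠ 0 := (sub_pos.2 ht.2).ne'
  simpa [mul_assoc, one_sub_ne_zero] using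
    hasSum_pow_mul_one_sub_smul_pow (z := (1 : ℝ)) norm_one.le ht k

theorem hasSum_integral_pow_mul_one_sub_smul_inv [CompleteSpace 𝕜] {z : 𝕜} (hz : ‖z‖ ≤ 1)
    (k : ℕ) :
    HasSum (fun m : ℕ => (((m : ℝ) + k + 1) * ((m : ℝ) + k + 2))⁻¹ • z ^ m)
      (∫ t in (0 : ℝ)..1, (t ^ k * (1 - t)) • (1 - t • z)⁻¹) := by
  have integral_term (m : ℕ) : ∫ t in (0 : ℝ)..1, (t ^ (m + k) * (1 - t)) • z ^ m =
      (((m : ℝ) + k + 1) * ((m : ℝ) + k + 2))⁻¹ • z ^ m := by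
    rw [intervalIntegral.integral_smul_const, integral_pow_mul_one_sub]
    push_cast
    rfl
  have ae_mem_Ico : ∀ᵐ t : ℝ, t ∈ Set.uIoc (0 : ℝ) 1 → t ∈ Set.Ico (0 : ℝ) 1 := by
    filter_upwards [Measure.ae_ne volume (1 : ℝ)] with t ht_ne ht
    rw [Set.uIoc_of_le zero_le_one] at ht
    exact ⟨ht.1.le, ht.2.lt_of_ne ht_ne⟩
  simp_rw [← integral_term]
  apply intervalIntegral.hasSum_integral_of_dominated_convergence
    (fun m t => t ^ (m + k) * (1 - t))
  · exact fun m => Continuous.aestronglyMeasurable (by fun_prop)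
  · intro m
    filter_upwards [ae_mem_Ico] with t mem_Ico ht
    have weight_nonneg : 0 ≤ t ^ (m + k) * (1 - t) :=
      mul_nonneg (pow_nonneg (mem_Ico ht).1 _) (sub_nonneg.2 (mem_Ico ht).2.le)
    rw [norm_smul, norm_pow, Real.norm_of_nonneg weight_nonneg]
    exact mul_le_of_le_one_right weight_nonneg (pow_le_one₀ (norm_nonneg z) hz)
  · filter_upwards [ae_mem_Ico] with t mem_Ico ht
    exact (hasSum_pow_mul_one_sub (mem_Ico ht) k).summable
  · refine ((continuous_pow k).intervalIntegrable 0 1).congr_uIoo fun t ht => ?_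
    rw [Set.uIoo_of_le zero_le_one] at ht
    exact (hasSum_pow_mul_one_sub (Set.Ioo_subset_Ico_self ht) k).tsum_eq.symm
  · filter_upwards [ae_mem_Ico] with t mem_Ico ht
    exact hasSum_pow_mul_one_sub_smul_pow hz (mem_Ico ht) k

end NormedAlgebra

theorem moment_integral_eq_integral_zero_one {T b : ℝ} (hbT : b ≠ T) (a : ℝ) (k : ℕ) :
    ∫ s in a..b, (b - s) ^ k * (s - a) / (T - s) =
      (b - a) ^ (k + 1) * ((b - a) / (T - b) *
        ∫ t in (0 : ℝ)..1, (t ^ k * (1 - t)) * (1 + t * ((b - a) / (T - b)))⁻¹) := by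
  have hTb : T - b ≠ 0 := sub_ne_zero.2 hbT.symm
  have substitution := intervalIntegral.mul_integral_comp_sub_mul (a := 0) (b := 1)
    (f := fun s => (b - s) ^ k * (s - a) / (T - s)) (b - a) b
  have denominator (t : ℝ) :
      T - (b - (b - a) * t) = (T - b) * (1 + t * ((b - a) / (T - b))) := by
    field_simp
    ring
  rw [mul_one, mul_zero, sub_sub_cancel, sub_zero] at substitution
  rw [← substitution, ← mul_assoc, ← intervalIntegral.integral_const_mul,
    ← intervalIntegral.integral_const_mul]
  congr 1 with t
  rw [denominator, sub_sub_cancel, mul_pow, div_eq_mul_inv, mul_inv]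
  ring

theorem moment_integral_series_general {T a b : ℝ} (hbT : b ≠ T) (hratio : |b - a| ≤ |T - b|)
    (k : ℕ) :
    Summable (fun m : ℕ =>
        |((-1 : ℝ) ^ m / (((m : ℝ) + k + 1) * ((m : ℝ) + k + 2)))
          * ((b - a) / (T - b)) ^ (m + 1)|) ∧
      (∫ s in a..b, (b - s) ^ k * (s - a) / (T - s)) =
        (b - a) ^ (k + 1) *
          ∑' m : ℕ, ((-1 : ℝ) ^ m / (((m : ℝ) + k + 1) * ((m : ℝ) + k + 2)))
            * ((b - a) / (T - b)) ^ (m + 1) := by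
  rw [moment_integral_eq_integral_zero_one hbT]
  set r := (b - a) / (T - b) with hr
  have norm_le_one : ‖-r‖ ≤ 1 := by
    rw [norm_neg, Real.norm_eq_abs, hr, abs_div]
    exact div_le_one_of_le₀ hratio (abs_nonneg _)
  have series : HasSum
      (fun m : ℕ => (-1 : ℝ) ^ m / (((m : ℝ) + k + 1) * ((m : ℝ) + k + 2)) * r ^ (m + 1))
      (r * ∫ t in (0 : ℝ)..1, (t ^ k * (1 - t)) * (1 + t * r)⁻¹) := by
    have term_eq (m : ℕ) : (-1 : ℝ) ^ m / (((m : ℝ) + k + 1) * ((m : ℝ) + k + 2)) * r ^ (m + 1) =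
        r * ((((m : ℝ) + k + 1) * ((m : ℝ) + k + 2))⁻¹ * (-r) ^ m) := by
      rw [neg_pow r]
      ring
    simpa only [term_eq, smul_eq_mul, mul_neg, sub_neg_eq_add] using
      (hasSum_integral_pow_mul_one_sub_smul_inv norm_le_one k).mul_left r
  exact ⟨series.summable.abs, by rw [series.tsum_eq]⟩

/-- Series expansion of the moment integrals `μ_{k,j}` of the paper:
`μ_k = (b-a)^{k+1} ∑_{l=1}^∞ (-1)^{l+1}/((l+k)(l+k+1)) ((b-a)/(T-b))^l`
(written below with the summation index shifted, `l = m+1`), the series being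
absolutely convergent since `(b-a)/(T-b) < 1`. -/
theorem moment_integral_series
    (T a b : ℝ) (hT : 0 < T) (ha : 0 ≤ a) (hab : a < b) (hbT : b < T)
    (hratio : b - a < T - b) (k : ℕ) :
    Summable (fun m : ℕ =>
        |((-1 : ℝ) ^ m / (((m : ℝ) + k + 1) * ((m : ℝ) + k + 2)))
          * ((b - a) / (T - b)) ^ (m + 1)|) ∧
      (∫ s in a..b, (b - s) ^ k * (s - a) / (T - s)) =
        (b - a) ^ (k + 1) *
          ∑' m : ℕ, ((-1 : ℝ) ^ m / (((m : ℝ) + k + 1) * ((m : ℝ) + k + 2)))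
            * ((b - a) / (T - b)) ^ (m + 1) := by
  exact moment_integral_series_general hbT.ne
    (by simpa only [abs_of_pos (sub_pos.2 hab), abs_of_pos (sub_pos.2 hbT)] using hratio.le) k
end

section
/- Let E and F be real vector spaces and L : E -> F a linear map. Let t0 < t1 be real numbers, tau = t1 - t0, m = (t0 + t1)/2, and let V0, V1, W0, W12, W1 in E and f0, f12, f1 in F satisfy (V1 - V0)/tau + L V1 = f1, (W12 - W0)/(tau/2) + L W12 = f12, (W1 - W12)/(tau/2) + L W1 = f1, and additionally (V0 - V0')/... no additional relation at level 0 beyond U0 = 2*W0 - V0. Set U0 = 2*W0 - V0, U1 = 2*W1 - V1, Uhat(s) = U1 - (t1 - s)*(U1 - U0)/tau, fhat(s) = f1 - (t1 - s)*(f1 - f0)/tau, psi0 = L U0 - f0, psi1 = L U1 - f1, and Z = W12 - W0 - (V1 - V0)/2. Then for every function f : R -> F and every real s, f(s) - (U1 - U0)/tau - L(Uhat(s)) = ( f(s) - fhat(s) ) + ( (f1 + f0)/2 - f12 ) + (m - s)*( psi1 - psi0 )/tau + L Z. -/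
/-!
Extrapolation turns the two backward Euler solutions into a perturbed Crank–Nicolson step: adding
the two half-step equations and subtracting the full-step equation gives
`(U1 - U0)/τ + L (U0 + U1)/2 = f12 - L Z`. On the other hand `L Uhat - fhat` is the linear
interpolant of `ψ0, ψ1`, that is, `(ψ0 + ψ1)/2` plus `s - m` times the slope `(ψ1 - ψ0)/τ`.
Inserting both into the residual leaves its four terms.
-/

section LinearInterpolant

variable {K E F : Type*} [Field K] [AddCommGroup E] [Module K E] [AddCommGroup F] [Module K F]

/-- The affine function of `s` with value `x0` at `t0` and `x1` at `t1`, which serves as the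
continuous-in-time reconstruction of nodal values. It is the constant `x0` when `t0 = t1`, by the
convention `a / 0 = 0`. -/
def linearInterpolant (t0 t1 : K) (x0 x1 : E) (s : K) : E :=
  AffineMap.lineMap x0 x1 ((s - t0) / (t1 - t0))

theorem map_linearInterpolant (L : E →ₗ[K] F) (t0 t1 : K) (x0 x1 : E) (s : K) :
    L (linearInterpolant t0 t1 x0 x1 s) = linearInterpolant t0 t1 (L x0) (L x1) s :=
  L.toAffineMap.apply_lineMap x0 x1 _

theorem linearInterpolant_sub (t0 t1 : K) (x0 x1 y0 y1 : E) (s : K) :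
    linearInterpolant t0 t1 (x0 - y0) (x1 - y1) s =
      linearInterpolant t0 t1 x0 x1 s - linearInterpolant t0 t1 y0 y1 s :=
  (AffineMap.lineMap_vsub_lineMap x0 x1 y0 y1 _).symm

theorem linearInterpolant_eq_right_sub {t0 t1 : K} (ht : t0 ≠ t1) (x0 x1 : E) (s : K) :
    linearInterpolant t0 t1 x0 x1 s = x1 - (t1 - s) • ((t1 - t0)⁻¹ • (x1 - x0)) := by
  have hτ : t1 - t0 ≠ 0 := sub_ne_zero.mpr ht.symm
  have weight : (s - t0) / (t1 - t0) = 1 - (t1 - s) * (t1 - t0)⁻¹ := by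
    field_simp
    ring
  rw [linearInterpolant, AffineMap.lineMap_apply_module', weight]
  module

theorem linearInterpolant_eq_midpoint_sub [NeZero (2 : K)] {t0 t1 : K} (ht : t0 ≠ t1)
    (x0 x1 : E) (s : K) :
    linearInterpolant t0 t1 x0 x1 s =
      (1 / 2 : K) • (x1 + x0) - (((t0 + t1) / 2 - s) * (t1 - t0)⁻¹) • (x1 - x0) := by
  have hτ : t1 - t0 ≠ 0 := sub_ne_zero.mpr ht.symm
  have htwo : (2 : K) ≠ 0 := NeZero.ne 2
  rw [linearInterpolant, AffineMap.lineMap_apply_module']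
  match_scalars <;> field_simp <;> ring

theorem map_linearInterpolant_sub_linearInterpolant [NeZero (2 : K)] {t0 t1 : K} (ht : t0 ≠ t1)
    (L : E →ₗ[K] F) (x0 x1 : E) (y0 y1 : F) (s : K) :
    L (linearInterpolant t0 t1 x0 x1 s) - linearInterpolant t0 t1 y0 y1 s =
      (1 / 2 : K) • ((L x1 - y1) + (L x0 - y0)) -
        (((t0 + t1) / 2 - s) * (t1 - t0)⁻¹) • ((L x1 - y1) - (L x0 - y0)) := by
  rw [map_linearInterpolant, ← linearInterpolant_sub, linearInterpolant_eq_midpoint_sub ht]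

end LinearInterpolant

section BackwardEuler

variable {K E F : Type*} [Field K] [AddCommGroup E] [Module K E] [AddCommGroup F] [Module K F]
variable (J L : E →ₗ[K] F)

/-- One backward Euler step of length `τ` from `x` to `y` for `d(J u)/dt + L u = g`, with `g` taken
at the new time. The map `J` identifies states with elements of the data space, as the inclusion
`V ⊆ V*` of a Gelfand triple does; `J = id` is the case of a single space. -/
def IsBackwardEulerStep (τ : K) (x y : E) (g : F) : Prop :=
  τ⁻¹ • J (y - x) + L y = g

variable {J L}

theorem IsBackwardEulerStep.smul_map_sub {τ : K} {x y : E} {g : F}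
    (h : IsBackwardEulerStep J L τ x y g) : τ⁻¹ • J (y - x) = g - L y :=
  eq_sub_of_add_eq h

theorem IsBackwardEulerStep.extrapolated_crankNicolson [NeZero (2 : K)] {τ : K}
    {V0 V1 W0 W12 W1 : E} {f12 f1 : F}
    (hV : IsBackwardEulerStep J L τ V0 V1 f1)
    (hW12 : IsBackwardEulerStep J L (τ / 2) W0 W12 f12)
    (hW1 : IsBackwardEulerStep J L (τ / 2) W12 W1 f1) :
    τ⁻¹ • J (((2 : K) • W1 - V1) - ((2 : K) • W0 - V0)) +
        (1 / 2 : K) • (L ((2 : K) • W1 - V1) + L ((2 : K) • W0 - V0)) =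
      f12 - L (W12 - W0 - (1 / 2 : K) • (V1 - V0)) := by
  have htwo : (2 : K) ≠ 0 := NeZero.ne 2
  have slope : τ⁻¹ • J (((2 : K) • W1 - V1) - ((2 : K) • W0 - V0)) =
      (τ / 2)⁻¹ • J (W1 - W12) + (τ / 2)⁻¹ • J (W12 - W0) - τ⁻¹ • J (V1 - V0) := by
    rw [inv_div]
    simp only [map_sub, map_smul]
    module
  rw [slope, hW1.smul_map_sub, hW12.smul_map_sub, hV.smul_map_sub]
  simp only [map_sub, map_smul]
  match_scalars <;> field_simp <;> ring

end BackwardEuler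

theorem extrapolatedEuler_residual_general
    {K E F : Type*} [Field K] [NeZero (2 : K)]
    [AddCommGroup E] [Module K E] [AddCommGroup F] [Module K F] (J L : E →ₗ[K] F)
    {t0 t1 τ m : K} (ht : t0 ≠ t1) (hτ : τ = t1 - t0) (hm : m = (t0 + t1) / 2)
    {V0 V1 W0 W12 W1 : E} {f0 f12 f1 : F}
    (hV : IsBackwardEulerStep J L τ V0 V1 f1)
    (hW12 : IsBackwardEulerStep J L (τ / 2) W0 W12 f12)
    (hW1 : IsBackwardEulerStep J L (τ / 2) W12 W1 f1)
    {U0 U1 : E} (hU0 : U0 = (2 : K) • W0 - V0) (hU1 : U1 = (2 : K) • W1 - V1)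
    {Uhat : K → E} {fhat : K → F} {ψ0 ψ1 : F} {Z : E}
    (hUhat : ∀ s, Uhat s = U1 - (t1 - s) • (τ⁻¹ • (U1 - U0)))
    (hfhat : ∀ s, fhat s = f1 - (t1 - s) • (τ⁻¹ • (f1 - f0)))
    (hψ0 : ψ0 = L U0 - f0) (hψ1 : ψ1 = L U1 - f1)
    (hZ : Z = W12 - W0 - (1 / 2 : K) • (V1 - V0)) (f : K → F) (s : K) :
    f s - τ⁻¹ • J (U1 - U0) - L (Uhat s) =
      (f s - fhat s) + ((1 / 2 : K) • (f1 + f0) - f12)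
        + ((m - s) * τ⁻¹) • (ψ1 - ψ0) + L Z := by
  have crankNicolson : τ⁻¹ • J (U1 - U0) + (1 / 2 : K) • (L U1 + L U0) = f12 - L Z := by
    rw [hU0, hU1, hZ]
    exact hV.extrapolated_crankNicolson hW12 hW1
  have interpolated_defect : L (Uhat s) - fhat s =
      (1 / 2 : K) • (ψ1 + ψ0) - ((m - s) * τ⁻¹) • (ψ1 - ψ0) := by
    rw [hUhat, hfhat, hτ, hm, hψ0, hψ1, ← linearInterpolant_eq_right_sub ht,
      ← linearInterpolant_eq_right_sub ht, map_linearInterpolant_sub_linearInterpolant ht]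
  rw [eq_sub_of_add_eq crankNicolson, eq_add_of_sub_eq interpolated_defect, hψ0, hψ1]
  module

/-- Full residual representation for one step of the Richardson-extrapolated
backward Euler method (underlying Theorem 11 of the paper).  Everything is
placed in a single real vector space `E`. -/
theorem extrapolatedEuler_residual
    {E : Type*} [AddCommGroup E] [Module ℝ E] (L : E →ₗ[ℝ] E)
    (t0 t1 τ m : ℝ) (ht : t0 < t1) (hτ : τ = t1 - t0) (hm : m = (t0 + t1) / 2)
    (V0 V1 W0 W12 W1 f0 f12 f1 : E)
    (hV : τ⁻¹ • (V1 - V0) + L V1 = f1)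
    (hW12 : (τ / 2)⁻¹ • (W12 - W0) + L W12 = f12)
    (hW1 : (τ / 2)⁻¹ • (W1 - W12) + L W1 = f1)
    (U0 U1 : E) (hU0 : U0 = (2 : ℝ) • W0 - V0) (hU1 : U1 = (2 : ℝ) • W1 - V1)
    (Uhat fhat : ℝ → E) (ψ0 ψ1 Z : E)
    (hUhat : ∀ s, Uhat s = U1 - (t1 - s) • (τ⁻¹ • (U1 - U0)))
    (hfhat : ∀ s, fhat s = f1 - (t1 - s) • (τ⁻¹ • (f1 - f0)))
    (hψ0 : ψ0 = L U0 - f0) (hψ1 : ψ1 = L U1 - f1)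
    (hZ : Z = W12 - W0 - (1 / 2 : ℝ) • (V1 - V0)) :
    ∀ (f : ℝ → E) (s : ℝ),
      f s - τ⁻¹ • (U1 - U0) - L (Uhat s) =
        (f s - fhat s) + ((1 / 2 : ℝ) • (f1 + f0) - f12)
          + ((m - s) * τ⁻¹) • (ψ1 - ψ0) + L Z :=
  extrapolatedEuler_residual_general LinearMap.id L ht.ne hτ hm hV hW12 hW1 hU0 hU1 hUhat
    hfhat hψ0 hψ1 hZ
end

section
/- Let E and F be real normed vector spaces and L : E -> F a linear map. Let t0 < t1 be real numbers, tau = t1 - t0, and let U0, U23, U1 in E and f0, f23, f1 in F satisfy the dG(1) relations U23 - U0 + (tau/12)*(5*L U23 - L U1) = (tau/12)*(5*f23 - f1) and U1 - U0 + (tau/4)*(3*L U23 + L U1) = (tau/4)*(3*f23 + f1). Define psi0 = f0 - L U0, psi23 = f23 - L U23, psi1 = f1 - L U1, zeta(x) = 3*(x - 1)*(x - 1/3), and the quadratic reconstruction Ubreve(t) = U1 - (3/2)*((t1 - t)/tau)*(U1 - U23) + ((U1 - 3*U23 + 2*U0)/2) * zeta((t - t0)/tau), and analogously fbreve(t) =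 f1 - (3/2)*((t1 - t)/tau)*(f1 - f23) + ((f1 - 3*f23 + 2*f0)/2) * zeta((t - t0)/tau). Then for every function f : R -> F and every real t, f(t) - Ubreve'(t) - L(Ubreve(t)) = ( f(t) - fbreve(t) ) + ( (psi1 - 3*psi23 + 2*psi0)/2 ) * zeta((t - t0)/tau), where Ubreve' denotes the derivative of the polynomial curve Ubreve. -/
/-!
The two dG(1) relations say that the increments of `U` are those of the Radau IIA scheme with
stage values `ψ = f - L U`. Hence the derivative of the quadratic reconstruction of `U` is the
linear interpolant of `ψ` at the Radau nodes. Since reconstruction is linear in the nodal values,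
`fbreve - L Ubreve` is the quadratic reconstruction of `ψ`, so the residual differs from
`f - fbreve` by the quadratic minus the linear interpolant of `ψ`, a multiple of the bubble `ζ`.
-/

namespace DG1

section Interpolation

variable {𝕜 V W : Type*} [Field 𝕜] [AddCommGroup V] [Module 𝕜 V] [AddCommGroup W] [Module 𝕜 W]

/-- The quadratic bubble on the reference interval `[0, 1]`: it vanishes at the Radau nodes `1 / 3`
and `1`, and is normalised to take the value `1` at `0`. -/
def radauBubble (x : 𝕜) : 𝕜 :=
  3 * (x - 1) * (x - 1 / 3)

/-- The affine curve with values `v23` and `v1` at the Radau nodes `t1 - (2 / 3) * (t1 - t0)` and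
`t1` of the interval from `t0` to `t1`. -/
def radauLinear (t0 t1 : 𝕜) (v23 v1 : V) (t : 𝕜) : V :=
  v1 - (3 / 2 * ((t1 - t) / (t1 - t0))) • (v1 - v23)

/-- The difference between `v0` and the value at `t0` of the linear interpolant
`radauLinear t0 t1 v23 v1`; it is the amplitude of the bubble in `radauReconstruction`. -/
def radauDefect (v0 v23 v1 : V) : V :=
  (1 / 2 : 𝕜) • (v1 - (3 : 𝕜) • v23 + (2 : 𝕜) • v0)

/-- The quadratic curve through `v0`, `v23`, `v1` at `t0` and the two Radau nodes, written as the
linear interpolant at the Radau nodes plus a multiple of the bubble. -/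
def radauReconstruction (t0 t1 : 𝕜) (v0 v23 v1 : V) (t : 𝕜) : V :=
  radauLinear t0 t1 v23 v1 t + radauBubble ((t - t0) / (t1 - t0)) • radauDefect (𝕜 := 𝕜) v0 v23 v1

theorem map_radauReconstruction (A : V →ₗ[𝕜] W) (t0 t1 : 𝕜) (v0 v23 v1 : V) (t : 𝕜) :
    A (radauReconstruction t0 t1 v0 v23 v1 t) =
      radauReconstruction t0 t1 (A v0) (A v23) (A v1) t := by
  simp only [radauReconstruction, radauLinear, radauDefect, map_add, map_sub, map_smul]

theorem radauReconstruction_sub (t0 t1 : 𝕜) (v0 v23 v1 w0 w23 w1 : V) (t : 𝕜) :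
    radauReconstruction t0 t1 (v0 - w0) (v23 - w23) (v1 - w1) t =
      radauReconstruction t0 t1 v0 v23 v1 t - radauReconstruction t0 t1 w0 w23 w1 t := by
  simp only [radauReconstruction, radauLinear, radauDefect]
  module

end Interpolation

section RadauIIA

variable {𝕜 W : Type*} [Field 𝕜] [CharZero 𝕜] [AddCommGroup W] [Module 𝕜 W]
  {τ : 𝕜} {u0 u23 u1 k23 k1 : W}

theorem sub_eq_of_radauIIA (h23 : u23 - u0 = (τ / 12) • ((5 : 𝕜) • k23 - k1))
    (h1 : u1 - u0 = (τ / 4) • ((3 : 𝕜) • k23 + k1)) :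
    u1 - u23 = (τ / 3) • (k23 + k1) := by
  linear_combination (norm := module) h1 - h23

theorem radauDefect_eq_of_radauIIA (h23 : u23 - u0 = (τ / 12) • ((5 : 𝕜) • k23 - k1))
    (h1 : u1 - u0 = (τ / 4) • ((3 : 𝕜) • k23 + k1)) :
    radauDefect (𝕜 := 𝕜) u0 u23 u1 = (τ / 4) • (k1 - k23) := by
  unfold radauDefect
  linear_combination (norm := module) (1 / 2 : 𝕜) • h1 - (3 / 2 : 𝕜) • h23

end RadauIIA

section Derivative

variable {𝕜 W : Type*} [NontriviallyNormedField 𝕜] [NormedAddCommGroup W] [NormedSpace 𝕜 W]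

theorem hasDerivAt_radauLinear (t0 t1 : 𝕜) (v23 v1 : W) (t : 𝕜) :
    HasDerivAt (radauLinear t0 t1 v23 v1) ((3 / 2 / (t1 - t0)) • (v1 - v23)) t := by
  have hcoeff : HasDerivAt (fun s ↦ 3 / 2 * ((t1 - s) / (t1 - t0))) (3 / 2 * (-1 / (t1 - t0))) t :=
    (((hasDerivAt_id t).const_sub t1).div_const (t1 - t0)).const_mul (3 / 2)
  refine ((hcoeff.smul_const (v1 - v23)).const_sub v1).congr_deriv ?_
  module

variable [CharZero 𝕜]

theorem hasDerivAt_radauBubble (x : 𝕜) : HasDerivAt radauBubble (6 * x - 4) x := by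
  have hprod := (((hasDerivAt_id x).sub_const 1).const_mul 3).mul
    ((hasDerivAt_id x).sub_const (1 / 3))
  refine hprod.congr_deriv ?_
  simp only [id]
  ring

theorem hasDerivAt_radauReconstruction (t0 t1 : 𝕜) (v0 v23 v1 : W) (t : 𝕜) :
    HasDerivAt (radauReconstruction t0 t1 v0 v23 v1)
      ((3 / 2 / (t1 - t0)) • (v1 - v23) +
        ((6 * ((t - t0) / (t1 - t0)) - 4) / (t1 - t0)) • radauDefect (𝕜 := 𝕜) v0 v23 v1) t := by
  have hscale : HasDerivAt (fun s ↦ (s - t0) / (t1 - t0)) (1 / (t1 - t0)) t :=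
    ((hasDerivAt_id t).sub_const t0).div_const (t1 - t0)
  have hbubble := (hasDerivAt_radauBubble _).comp t hscale
  rw [mul_one_div] at hbubble
  exact (hasDerivAt_radauLinear t0 t1 v23 v1 t).add (hbubble.smul_const _)

theorem hasDerivAt_radauReconstruction_of_radauIIA {t0 t1 : 𝕜} (ht : t0 ≠ t1)
    {u0 u23 u1 k23 k1 : W}
    (h23 : u23 - u0 = ((t1 - t0) / 12) • ((5 : 𝕜) • k23 - k1))
    (h1 : u1 - u0 = ((t1 - t0) / 4) • ((3 : 𝕜) • k23 + k1)) (t : 𝕜) :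
    HasDerivAt (radauReconstruction t0 t1 u0 u23 u1) (radauLinear t0 t1 k23 k1 t) t := by
  have hτ : t1 - t0 ≠ 0 := sub_ne_zero.mpr ht.symm
  refine (hasDerivAt_radauReconstruction t0 t1 u0 u23 u1 t).congr_deriv ?_
  rw [sub_eq_of_radauIIA h23 h1, radauDefect_eq_of_radauIIA h23 h1, radauLinear]
  match_scalars <;> field_simp <;> ring

end Derivative

end DG1

open DG1

/-- The solution values live in a space `V` without topology, mapped to the data space `W` by `ι`;
taking for `ι` the inclusion of the domain of `L` covers unbounded operators. -/
theorem dG1_residual_general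
    {𝕜 V W : Type*} [NontriviallyNormedField 𝕜] [CharZero 𝕜] [AddCommGroup V] [Module 𝕜 V]
    [NormedAddCommGroup W] [NormedSpace 𝕜 W] (ι L : V →ₗ[𝕜] W) {t0 t1 : 𝕜} (ht : t0 ≠ t1)
    {U0 U23 U1 : V} (f0 : W) {f23 f1 : W}
    (hdG1 : ι U23 - ι U0 + ((t1 - t0) / 12) • ((5 : 𝕜) • L U23 - L U1) =
      ((t1 - t0) / 12) • ((5 : 𝕜) • f23 - f1))
    (hdG2 : ι U1 - ι U0 + ((t1 - t0) / 4) • ((3 : 𝕜) • L U23 + L U1) =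
      ((t1 - t0) / 4) • ((3 : 𝕜) • f23 + f1))
    (f : 𝕜 → W) (t : 𝕜) :
    f t - deriv (fun s ↦ ι (radauReconstruction t0 t1 U0 U23 U1 s)) t -
        L (radauReconstruction t0 t1 U0 U23 U1 t) =
      (f t - radauReconstruction t0 t1 f0 f23 f1 t) +
        radauBubble ((t - t0) / (t1 - t0)) •
          radauDefect (𝕜 := 𝕜) (f0 - L U0) (f23 - L U23) (f1 - L U1) := by
  have h23 : ι U23 - ι U0 =
      ((t1 - t0) / 12) • ((5 : 𝕜) • (f23 - L U23) - (f1 - L U1)) := by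
    linear_combination (norm := module) hdG1
  have h1 : ι U1 - ι U0 = ((t1 - t0) / 4) • ((3 : 𝕜) • (f23 - L U23) + (f1 - L U1)) := by
    linear_combination (norm := module) hdG2
  have hderiv : deriv (fun s ↦ ι (radauReconstruction t0 t1 U0 U23 U1 s)) t =
      radauLinear t0 t1 (f23 - L U23) (f1 - L U1) t := by
    simp only [map_radauReconstruction]
    exact (hasDerivAt_radauReconstruction_of_radauIIA ht h23 h1 t).deriv
  have hpsi : radauReconstruction t0 t1 f0 f23 f1 t - L (radauReconstruction t0 t1 U0 U23 U1 t) =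
      radauLinear t0 t1 (f23 - L U23) (f1 - L U1) t +
        radauBubble ((t - t0) / (t1 - t0)) •
          radauDefect (𝕜 := 𝕜) (f0 - L U0) (f23 - L U23) (f1 - L U1) := by
    rw [map_radauReconstruction, ← radauReconstruction_sub, radauReconstruction]
  rw [hderiv]
  linear_combination (norm := abel) hpsi

/-- Residual representation for one step of the dG(1) method (underlying
Theorem 10 of the paper).  Everything is placed in a single real normed
vector space `E`. -/
theorem dG1_residual
    {E : Type*} [NormedAddCommGroup E] [NormedSpace ℝ E] (L : E →ₗ[ℝ] E)
    (t0 t1 τ : ℝ) (ht : t0 < t1) (hτ : τ = t1 - t0)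
    (U0 U23 U1 f0 f23 f1 : E)
    (hdG1 : U23 - U0 + (τ / 12) • ((5 : ℝ) • L U23 - L U1)
              = (τ / 12) • ((5 : ℝ) • f23 - f1))
    (hdG2 : U1 - U0 + (τ / 4) • ((3 : ℝ) • L U23 + L U1)
              = (τ / 4) • ((3 : ℝ) • f23 + f1))
    (ψ0 ψ23 ψ1 : E)
    (hψ0 : ψ0 = f0 - L U0) (hψ23 : ψ23 = f23 - L U23) (hψ1 : ψ1 = f1 - L U1)
    (ζ : ℝ → ℝ) (hζ : ∀ x, ζ x = 3 * (x - 1) * (x - 1 / 3))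
    (Ubreve fbreve : ℝ → E)
    (hUbreve : ∀ t, Ubreve t =
        U1 - ((3 / 2) * ((t1 - t) / τ)) • (U1 - U23)
          + ζ ((t - t0) / τ) • ((1 / 2 : ℝ) • (U1 - (3 : ℝ) • U23 + (2 : ℝ) • U0)))
    (hfbreve : ∀ t, fbreve t =
        f1 - ((3 / 2) * ((t1 - t) / τ)) • (f1 - f23)
          + ζ ((t - t0) / τ) • ((1 / 2 : ℝ) • (f1 - (3 : ℝ) • f23 + (2 : ℝ) • f0))) :
    ∀ (f : ℝ → E) (t : ℝ),
      f t - deriv Ubreve t - L (Ubreve t) =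
        (f t - fbreve t)
          + ζ ((t - t0) / τ) • ((1 / 2 : ℝ) • (ψ1 - (3 : ℝ) • ψ23 + (2 : ℝ) • ψ0)) := by
  subst hτ hψ0 hψ23 hψ1
  obtain rfl : ζ = radauBubble := funext hζ
  obtain rfl : Ubreve = radauReconstruction t0 t1 U0 U23 U1 := funext hUbreve
  obtain rfl : fbreve = radauReconstruction t0 t1 f0 f23 f1 := funext hfbreve
  exact dG1_residual_general .id L ht.ne f0 hdG1 hdG2
end

section
/- Let E and F be real normed vector spaces and L : E -> F a linear map. Let t0 < t1 be real numbers, tau = t1 - t0, and let U0, U23, U1 in E and f23, f1 in F satisfy the dG(1) relations U23 - U0 + (tau/12)*(5*L U23 - L U1) = (tau/12)*(5*f23 - f1) and U1 - U0 + (tau/4)*(3*L U23 + L U1) = (tau/4)*(3*f23 + f1). Define psi23 = f23 - L U23, psi1 = f1 - L U1, zeta(x) = 3*(x - 1)*(x - 1/3), and Ubreve(t) = U1 - (3/2)*((t1 - t)/tau)*(U1 - U23) + ((U1 - 3*U23 + 2*U0)/2) * zeta((t - t0)/tau). Then for every real t, the derivative of Ubreve satisfies Ubreve'(t) = psi1 -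 (3/2)*((t1 - t)/tau)*(psi1 - psi23); that is, Ubreve' is the linear interpolant of psi = f - L U through the values psi23 at t1 - (2/3)*tau and psi1 at t1. -/
/-!
Subtracting the dG(1) relations, written as `U₂₃ - U₀ = (τ/12)(5ψ₂₃ - ψ₁)` and
`U₁ - U₀ = (τ/4)(3ψ₂₃ + ψ₁)`, gives `U₁ - U₂₃ = (τ/3)(ψ₂₃ + ψ₁)`, and the coefficient of the
quadratic bubble in the reconstruction is `(τ/4)(ψ₁ - ψ₂₃)`. At `x = (t - t₀)/τ` the derivative of
the reconstruction is therefore `(ψ₂₃ + ψ₁)/2 + ((3x - 2)/2)(ψ₁ - ψ₂₃)`, which is affine in `x`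
and equals `ψ₂₃` at `x = 1/3` and `ψ₁` at `x = 1`.
-/

section Algebra

variable {𝕜 E : Type*} [Field 𝕜] [AddCommGroup E] [Module 𝕜 E]

/-- The quadratic polynomial on the reference interval `[0, 1]` that vanishes at the two Radau nodes
`1/3` and `1` and takes the value `1` at `0`. -/
def radauBubble (x : 𝕜) : 𝕜 :=
  3 * (x - 1) * (x - 1 / 3)

/-- The affine function with value `a` at the Radau node `t1 - (2/3) * (t1 - t0)` and value `b` at
the Radau node `t1`. -/
def radauInterpolant (t0 t1 : 𝕜) (a b : E) (t : 𝕜) : E :=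
  b - ((3 / 2) * ((t1 - t) / (t1 - t0))) • (b - a)

/-- The coefficient of the bubble in `dG1Reconstruction`: the gap at `t0` between `U0` and the
affine function that interpolates `U23` and `U1` at the Radau nodes. -/
def dG1BubbleCoeff (𝕜 : Type*) {E : Type*} [Field 𝕜] [AddCommGroup E] [Module 𝕜 E]
    (U0 U23 U1 : E) : E :=
  (1 / 2 : 𝕜) • (U1 - (3 : 𝕜) • U23 + (2 : 𝕜) • U0)

/-- The quadratic reconstruction of a dG(1) approximation on `[t0, t1]`: the quadratic function with
value `U0` at `t0` and values `U23`, `U1` at the Radau nodes. -/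
def dG1Reconstruction (t0 t1 : 𝕜) (U0 U23 U1 : E) (t : 𝕜) : E :=
  radauInterpolant t0 t1 U23 U1 t
    + radauBubble ((t - t0) / (t1 - t0)) • dG1BubbleCoeff 𝕜 U0 U23 U1

variable {τ : 𝕜} {U0 U23 U1 f23 f1 g23 g1 ψ23 ψ1 : E}

theorem dG1_relation_twoThirds_iff :
    U23 - U0 + (τ / 12) • ((5 : 𝕜) • g23 - g1) = (τ / 12) • ((5 : 𝕜) • f23 - f1) ↔
      U23 - U0 = (τ / 12) • ((5 : 𝕜) • (f23 - g23) - (f1 - g1)) := by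
  rw [← eq_sub_iff_add_eq, ← smul_sub, sub_sub_sub_comm, ← smul_sub]

theorem dG1_relation_one_iff :
    U1 - U0 + (τ / 4) • ((3 : 𝕜) • g23 + g1) = (τ / 4) • ((3 : 𝕜) • f23 + f1) ↔
      U1 - U0 = (τ / 4) • ((3 : 𝕜) • (f23 - g23) + (f1 - g1)) := by
  rw [← eq_sub_iff_add_eq, ← smul_sub, add_sub_add_comm, ← smul_sub]

variable [CharZero 𝕜]

theorem sub_eq_smul_add_of_dG1_increments
    (h23 : U23 - U0 = (τ / 12) • ((5 : 𝕜) • ψ23 - ψ1))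
    (h1 : U1 - U0 = (τ / 4) • ((3 : 𝕜) • ψ23 + ψ1)) :
    U1 - U23 = (τ / 3) • (ψ23 + ψ1) := by
  linear_combination (norm := module) h1 - h23

theorem dG1BubbleCoeff_eq_smul_sub_of_dG1_increments
    (h23 : U23 - U0 = (τ / 12) • ((5 : 𝕜) • ψ23 - ψ1))
    (h1 : U1 - U0 = (τ / 4) • ((3 : 𝕜) • ψ23 + ψ1)) :
    dG1BubbleCoeff 𝕜 U0 U23 U1 = (τ / 4) • (ψ1 - ψ23) := by
  unfold dG1BubbleCoeff
  linear_combination (norm := module) (1 / 2 : 𝕜) • h1 - (3 / 2 : 𝕜) • h23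

end Algebra

section Calculus

variable {𝕜 E : Type*} [NontriviallyNormedField 𝕜] [NormedAddCommGroup E] [NormedSpace 𝕜 E]

theorem hasDerivAt_radauInterpolant (t0 t1 : 𝕜) (a b : E) (t : 𝕜) :
    HasDerivAt (radauInterpolant t0 t1 a b) ((3 / 2 / (t1 - t0)) • (b - a)) t := by
  have h_weight : HasDerivAt (fun s : 𝕜 ↦ (3 / 2) * ((t1 - s) / (t1 - t0)))
      ((3 / 2) * (-1 / (t1 - t0))) t :=
    (((hasDerivAt_id t).const_sub t1).div_const _).const_mul _
  refine ((h_weight.smul_const (b - a)).const_sub b).congr_deriv ?_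
  module

variable [CharZero 𝕜]

theorem hasDerivAt_radauBubble (x : 𝕜) : HasDerivAt radauBubble (6 * x - 4) x := by
  have h_factors := (((hasDerivAt_id x).sub_const 1).const_mul 3).mul
    ((hasDerivAt_id x).sub_const (1 / 3))
  refine h_factors.congr_deriv ?_
  simp only [id]
  ring

theorem hasDerivAt_dG1Reconstruction (t0 t1 : 𝕜) (U0 U23 U1 : E) (t : 𝕜) :
    HasDerivAt (dG1Reconstruction t0 t1 U0 U23 U1)
      ((3 / 2 / (t1 - t0)) • (U1 - U23)
        + ((6 * ((t - t0) / (t1 - t0)) - 4) / (t1 - t0)) • dG1BubbleCoeff 𝕜 U0 U23 U1) t := by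
  have h_rescale : HasDerivAt (fun s : 𝕜 ↦ (s - t0) / (t1 - t0)) (1 / (t1 - t0)) t :=
    ((hasDerivAt_id t).sub_const t0).div_const _
  have h_bubble := (hasDerivAt_radauBubble ((t - t0) / (t1 - t0))).comp t h_rescale
  rw [mul_one_div] at h_bubble
  exact (hasDerivAt_radauInterpolant t0 t1 U23 U1 t).add (h_bubble.smul_const _)

theorem dG1_reconstruction_derivative_general (L : E → E) {t0 t1 : 𝕜} (ht : t0 ≠ t1)
    {U0 U23 U1 f23 f1 : E}
    (hdG1 : U23 - U0 + ((t1 - t0) / 12) • ((5 : 𝕜) • L U23 - L U1)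
      = ((t1 - t0) / 12) • ((5 : 𝕜) • f23 - f1))
    (hdG2 : U1 - U0 + ((t1 - t0) / 4) • ((3 : 𝕜) • L U23 + L U1)
      = ((t1 - t0) / 4) • ((3 : 𝕜) • f23 + f1))
    (t : 𝕜) :
    HasDerivAt (dG1Reconstruction t0 t1 U0 U23 U1)
      (radauInterpolant t0 t1 (f23 - L U23) (f1 - L U1) t) t := by
  have h23 := dG1_relation_twoThirds_iff.mp hdG1
  have h1 := dG1_relation_one_iff.mp hdG2
  have hτ : t1 - t0 ≠ 0 := sub_ne_zero.mpr ht.symm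
  refine (hasDerivAt_dG1Reconstruction t0 t1 U0 U23 U1 t).congr_deriv ?_
  rw [sub_eq_smul_add_of_dG1_increments h23 h1,
    dG1BubbleCoeff_eq_smul_sub_of_dG1_increments h23 h1, radauInterpolant]
  match_scalars <;> field_simp <;> ring

end Calculus

/-- Key intermediate identity of the dG(1) a posteriori analysis: the
derivative of the continuous piecewise quadratic reconstruction `Ubreve`
coincides with the linear interpolant of `ψ = f - L U` through the two Radau
nodes.  Everything is placed in a single real normed vector space `E`. -/
theorem dG1_reconstruction_derivative
    {E : Type*} [NormedAddCommGroup E] [NormedSpace ℝ E] (L : E →ₗ[ℝ] E)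
    (t0 t1 τ : ℝ) (ht : t0 < t1) (hτ : τ = t1 - t0)
    (U0 U23 U1 f23 f1 : E)
    (hdG1 : U23 - U0 + (τ / 12) • ((5 : ℝ) • L U23 - L U1)
              = (τ / 12) • ((5 : ℝ) • f23 - f1))
    (hdG2 : U1 - U0 + (τ / 4) • ((3 : ℝ) • L U23 + L U1)
              = (τ / 4) • ((3 : ℝ) • f23 + f1))
    (ψ23 ψ1 : E)
    (hψ23 : ψ23 = f23 - L U23) (hψ1 : ψ1 = f1 - L U1)
    (ζ : ℝ → ℝ) (hζ : ∀ x, ζ x = 3 * (x - 1) * (x - 1 / 3))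
    (Ubreve : ℝ → E)
    (hUbreve : ∀ t, Ubreve t =
        U1 - ((3 / 2) * ((t1 - t) / τ)) • (U1 - U23)
          + ζ ((t - t0) / τ) • ((1 / 2 : ℝ) • (U1 - (3 : ℝ) • U23 + (2 : ℝ) • U0))) :
    ∀ t : ℝ,
      HasDerivAt Ubreve (ψ1 - ((3 / 2) * ((t1 - t) / τ)) • (ψ1 - ψ23)) t := by
  obtain rfl : Ubreve = dG1Reconstruction t0 t1 U0 U23 U1 :=
    funext fun t ↦ by rw [hUbreve, hζ, hτ]; rfl
  subst hτ hψ23 hψ1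
  exact dG1_reconstruction_derivative_general L ht.ne hdG1 hdG2
end

section
/- Let E and F be real vector spaces and L : E -> F a linear map. Let t0 < t1 be real numbers with step tau1 = t1 - t0, let tau0 > 0 be the previous step, and set m = (t0 + t1)/2. Let U0, U1 in E, f0, f1 in F, and auxiliary vectors d in E (the previous first difference quotient) and e in E (the previous second difference quotient) satisfy the BDF-2 relation D + tau1 * D2 + L U1 = f1 and the previous-level relation d + tau0 * e + L U0 = f0, where D = (U1 - U0)/tau1 and D2 = (D - d)/(tau1 + tau0). Define Uhat(s) = U1 - (t1 - s)*(U1 - U0)/tau1 and fhat(s) = f1 - (t1 - s)*(f1 - f0)/tau1. Then for every function f : R -> F and every real s, f(s) - D - L(Uhat(s)) = ( f(s) - fhat(s) ) + 2*(s - m)*D2 + (s - t1)*(tau0/tau1)*( D2 - e ). -/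
/-!
Both levels of the scheme have the form `ι g + L U = f`, where `g` is the BDF-2 derivative at that
level and `ι` embeds it into the space of the data (the identity when the two spaces agree).
Linear interpolation is linear in the nodal values, so the interpolants satisfy `ι ĝ + L Û = f̂` on
the whole step, and the residual is `(f - f̂) + ι (ĝ - D)`. Finally `ĝ - D` is affine in time: its
value at `t₁` is `τ₁ D₂`, and its slope is `τ₁⁻¹ (g₁ - g₀)` with
`g₁ - g₀ = 2 τ₁ D₂ + τ₀ (D₂ - e)`.
-/

section

variable {K E F : Type*} [Field K] [AddCommGroup E] [Module K E] [AddCommGroup F] [Module K F]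

/-- The backward difference quotient `δ_t` of the nodal values `x`, `y` over a step of length `τ`.
It serves for both the first and the second difference quotients, and is `0` when `τ = 0`. -/
def backwardDiff (τ : K) (x y : E) : E :=
  τ⁻¹ • (y - x)

/-- The BDF-2 approximation `D_t U = δ_t U + τ δ_t² U` of the time derivative at the end of a step
of length `τ`, as a function of the first and second difference quotients `D` and `D₂`. -/
def bdf2Deriv (τ : K) (D D₂ : E) : E :=
  D + τ • D₂

/-- The linear interpolant of the nodal values `x` at time `t - τ` and `y` at time `t`, evaluated at
time `s`. It is anchored at the right end of the step, as usual for backward differentiation. -/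
def linearInterp (t τ : K) (x y : E) (s : K) : E :=
  y - (t - s) • backwardDiff τ x y

theorem smul_backwardDiff {τ : K} (hτ : τ ≠ 0) (x y : E) :
    τ • backwardDiff τ x y = y - x :=
  smul_inv_smul₀ hτ _

theorem backwardDiff_add (τ : K) (x x' y y' : E) :
    backwardDiff τ (x + x') (y + y') = backwardDiff τ x y + backwardDiff τ x' y' := by
  simp only [backwardDiff, add_sub_add_comm, smul_add]

theorem linearInterp_add (t τ : K) (x x' y y' : E) (s : K) :
    linearInterp t τ (x + x') (y + y') s = linearInterp t τ x y s + linearInterp t τ x' y' s := by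
  simp only [linearInterp, backwardDiff_add, smul_add, add_sub_add_comm]

theorem map_backwardDiff (A : E →ₗ[K] F) (τ : K) (x y : E) :
    A (backwardDiff τ x y) = backwardDiff τ (A x) (A y) := by
  simp only [backwardDiff, map_smul, map_sub]

theorem map_linearInterp (A : E →ₗ[K] F) (t τ : K) (x y : E) (s : K) :
    A (linearInterp t τ x y s) = linearInterp t τ (A x) (A y) s := by
  simp only [linearInterp, map_sub, map_smul, map_backwardDiff]

theorem map_linearInterp_add_map_linearInterp (ι L : E →ₗ[K] F) (t τ : K) {g₀ g₁ U₀ U₁ : E}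
    {f₀ f₁ : F} (h₀ : ι g₀ + L U₀ = f₀) (h₁ : ι g₁ + L U₁ = f₁) (s : K) :
    ι (linearInterp t τ g₀ g₁ s) + L (linearInterp t τ U₀ U₁ s) = linearInterp t τ f₀ f₁ s := by
  rw [map_linearInterp, map_linearInterp, ← linearInterp_add, h₀, h₁]

theorem bdf2Deriv_sub_bdf2Deriv {τ₁ τ₀ : K} (hτ : τ₁ + τ₀ ≠ 0) {d D D₂ : E} (e : E)
    (hD₂ : D₂ = backwardDiff (τ₁ + τ₀) d D) :
    bdf2Deriv τ₁ D D₂ - bdf2Deriv τ₀ d e = (2 * τ₁) • D₂ + τ₀ • (D₂ - e) := by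
  have hDd : D - d = (τ₁ + τ₀) • D₂ := by rw [hD₂, smul_backwardDiff hτ]
  calc
    bdf2Deriv τ₁ D D₂ - bdf2Deriv τ₀ d e = (D - d) + (τ₁ • D₂ - τ₀ • e) := add_sub_add_comm ..
    _ = (τ₁ + τ₀) • D₂ + (τ₁ • D₂ - τ₀ • e) := by rw [hDd]
    _ = (2 * τ₁) • D₂ + τ₀ • (D₂ - e) := by module

theorem linearInterp_bdf2Deriv_sub {t₀ t₁ τ₁ τ₀ m : K} (hτ₁ : τ₁ = t₁ - t₀) (hτ₁_ne : τ₁ ≠ 0)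
    (hτ : τ₁ + τ₀ ≠ 0) (hm : 2 * m = t₀ + t₁) {d D D₂ : E} (e : E)
    (hD₂ : D₂ = backwardDiff (τ₁ + τ₀) d D) (s : K) :
    linearInterp t₁ τ₁ (bdf2Deriv τ₀ d e) (bdf2Deriv τ₁ D D₂) s - D =
      (2 * (s - m)) • D₂ + ((s - t₁) * (τ₀ / τ₁)) • (D₂ - e) := by
  have slope_eq : backwardDiff τ₁ (bdf2Deriv τ₀ d e) (bdf2Deriv τ₁ D D₂) =
      (2 : K) • D₂ + (τ₀ / τ₁) • (D₂ - e) := by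
    rw [backwardDiff, bdf2Deriv_sub_bdf2Deriv hτ e hD₂, smul_add, smul_smul, smul_smul,
      mul_comm 2 τ₁, inv_mul_cancel_left₀ hτ₁_ne, inv_mul_eq_div]
  have midpoint_eq : 2 * (s - m) = τ₁ + 2 * (s - t₁) := by linear_combination -hm - hτ₁
  rw [linearInterp, slope_eq, midpoint_eq, bdf2Deriv]
  module

/-- `ι` is the embedding that lets the difference quotients in `E` be added to the values of `L`
in `F`, as for `V ↪ V*` in a Gelfand triple. -/
theorem BDF2_residual_general (ι L : E →ₗ[K] F) {t₀ t₁ τ₁ τ₀ m : K} (hτ₁ : τ₁ = t₁ - t₀)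
    (hτ₁_ne : τ₁ ≠ 0) (hτ : τ₁ + τ₀ ≠ 0) (hm : 2 * m = t₀ + t₁) {U₀ U₁ d e D₂ : E} {f₀ f₁ : F}
    (hD₂ : D₂ = backwardDiff (τ₁ + τ₀) d (backwardDiff τ₁ U₀ U₁))
    (hscheme : ι (bdf2Deriv τ₁ (backwardDiff τ₁ U₀ U₁) D₂) + L U₁ = f₁)
    (hprev : ι (bdf2Deriv τ₀ d e) + L U₀ = f₀) (f : K → F) (s : K) :
    f s - ι (backwardDiff τ₁ U₀ U₁) - L (linearInterp t₁ τ₁ U₀ U₁ s) =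
      (f s - linearInterp t₁ τ₁ f₀ f₁ s) + (2 * (s - m)) • ι D₂ +
        ((s - t₁) * (τ₀ / τ₁)) • ι (D₂ - e) := by
  set D := backwardDiff τ₁ U₀ U₁
  set g := linearInterp t₁ τ₁ (bdf2Deriv τ₀ d e) (bdf2Deriv τ₁ D D₂) s
  calc
    f s - ι D - L (linearInterp t₁ τ₁ U₀ U₁ s) =
        (f s - linearInterp t₁ τ₁ f₀ f₁ s) + ι (g - D) := by
      rw [← map_linearInterp_add_map_linearInterp ι L t₁ τ₁ hprev hscheme, map_sub]
      abel
    _ = _ := by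
      rw [linearInterp_bdf2Deriv_sub hτ₁ hτ₁_ne hτ hm e hD₂, map_add, map_smul, map_smul, add_assoc]

end

/-- Residual representation for one interior step of the BDF-2 method
(underlying Theorem 13 of the paper).  Everything is placed in a single real
vector space `E`. -/
theorem BDF2_residual
    {E : Type*} [AddCommGroup E] [Module ℝ E] (L : E →ₗ[ℝ] E)
    (t0 t1 τ1 τ0 m : ℝ) (ht : t0 < t1) (hτ1 : τ1 = t1 - t0) (hτ0 : 0 < τ0)
    (hm : m = (t0 + t1) / 2)
    (U0 U1 f0 f1 d e : E)
    (D D2 : E)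
    (hD : D = τ1⁻¹ • (U1 - U0))
    (hD2 : D2 = (τ1 + τ0)⁻¹ • (D - d))
    (hscheme : D + τ1 • D2 + L U1 = f1)
    (hprev : d + τ0 • e + L U0 = f0)
    (Uhat fhat : ℝ → E)
    (hUhat : ∀ s, Uhat s = U1 - (t1 - s) • (τ1⁻¹ • (U1 - U0)))
    (hfhat : ∀ s, fhat s = f1 - (t1 - s) • (τ1⁻¹ • (f1 - f0))) :
    ∀ (f : ℝ → E) (s : ℝ),
      f s - D - L (Uhat s) =
        (f s - fhat s) + (2 * (s - m)) • D2
          + ((s - t1) * (τ0 / τ1)) • (D2 - e) := by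
  intro f s
  have hτ1_pos : 0 < τ1 := hτ1 ▸ sub_pos.mpr ht
  rw [hUhat, hfhat]
  subst hD
  exact BDF2_residual_general LinearMap.id L hτ1 hτ1_pos.ne' (add_pos hτ1_pos hτ0).ne'
    (by rw [hm]; ring) hD2 hscheme hprev f s
end
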